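/- Let m ≥ 2, δ ≥ 2, n = m·δ, and V = 𝔽₂ⁿ, identified with ℤ/2ⁿℤ by binary expansion (the vector (a₀,…,a_{n−1}) corresponding to Σ a_i 2^i); write v ⊞ k for the addition modulo 2ⁿ transported to V, and σ_k : V → V, v ↦ v ⊞ k. Let γ : V → V be a parallel S-box: γ(x₁,…,x_δ) = (γ₁(x₁),…,γ_δ(x_δ)) with each γ_j a bijection of the brick 𝔽₂^m satisfying γ_j(0) ≠ 0. Let λ : V → V be a bijective 𝔽₂-linear map which preserves no non-trivial type, i.e. for every subset D ⊆ V in standard form of non-trivial type, the type of Dλ differs from the type of D. Then the subgroup Γ∞ of Sym(V) generated by the round functions {v ↦ σ_k(λ(γ(v))) : k ∈ V} is primitive: it acts transitively on V, and every Γ∞-invariant partition of V is either {V} or the partition into singletons. -/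

import Mathlib

/-!
Quotients of round functions are the translations `v ↦ v ⊞ k`, so the group is transitive and a
block is, read in `ℤ/2ⁿℤ`, a coset of a subgroup of this cyclic group.  As reduction modulo `2ᵗ`
reads the first `t` bits, blocks are cylinders: sets of vectors with prescribed first `t`
coordinates.

Suppose that a cylinder `C` with `0 < t < n` is a block.  Parallel bijections do not change the
type of a set.  Applied to the S-box `γ`, this says that `γ(C)` has the type of `C`, and `γ(C)` is
in standard form of non-trivial type.  Applied to the XOR translations, it says that all cylinders
of depth `t` have the same type.  But `λ(γ(C))` is a translate of the block `C`, hence again a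
cylinder of depth `t`, so `λ` preserves the type of `γ(C)`.
-/

open Matrix

/-- The index in `Fin (m * δ)` of the `i`-th coordinate of the `j`-th brick. -/
def brickIdx (m δ : ℕ) (j : Fin δ) (i : Fin m) : Fin (m * δ) :=
  ⟨m * j.val + i.val, by
    have h1 : m * j.val + i.val < m * (j.val + 1) := by
      rw [Nat.mul_succ]
      exact Nat.add_lt_add_left i.isLt _
    exact lt_of_lt_of_le h1 (Nat.mul_le_mul le_rfl j.isLt)⟩

/-- The projection of a vector on its `j`-th brick. -/
def brickProj (m δ : ℕ) (v : Fin (m * δ) → ZMod 2) (j : Fin δ) : Fin m → ZMod 2 :=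
  fun i => v (brickIdx m δ j i)

/-- The `j`-th box of a subset `D`: the projection of `D` on the `j`-th brick. -/
def box (m δ : ℕ) (D : Set (Fin (m * δ) → ZMod 2)) (j : Fin δ) : Set (Fin m → ZMod 2) :=
  (fun v => brickProj m δ v j) '' D

/-- A box is white if it is a singleton. -/
def IsWhite {α : Type*} (S : Set α) : Prop := ∃ a, S = {a}

/-- A box is black if it is everything. -/
def IsBlack {α : Type*} (S : Set α) : Prop := S = Set.univ

/-- A box is ruled if it is neither white nor black. -/
def IsRuled {α : Type*} (S : Set α) : Prop := ¬ IsWhite S ∧ ¬ IsBlack S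

/-- The set `{v_w} × R × 𝔽₂^{m·n_b}` in standard form: the first `nw` bricks are fixed
(equal to `w`), the brick number `nw` (0-indexed) lies in `R` when `nr = 1`, and the
remaining bricks are free. -/
def StdSet (m δ nw nr : ℕ) (w : Fin δ → Fin m → ZMod 2) (R : Set (Fin m → ZMod 2)) :
    Set (Fin (m * δ) → ZMod 2) :=
  { v | (∀ j : Fin δ, (j : ℕ) < nw → brickProj m δ v j = w j) ∧
        (nr = 1 → ∀ j : Fin δ, (j : ℕ) = nw → brickProj m δ v j ∈ R) }

/-- `D` is in standard form of type `(nw, nr, nb)`. -/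
def StdForm (m δ : ℕ) (D : Set (Fin (m * δ) → ZMod 2)) (nw nr nb : ℕ) : Prop :=
  nw + nr + nb = δ ∧ nr ≤ 1 ∧
  ∃ (w : Fin δ → Fin m → ZMod 2) (R : Set (Fin m → ZMod 2)),
    (nr = 1 → 2 ≤ R.ncard ∧ R.ncard ≤ 2 ^ m - 1) ∧ D = StdSet m δ nw nr w R

/-- `D` has type `(nw, nr, nb)`: its first `nw` boxes are white, the next `nr` boxes are
ruled, and its last `nb` boxes are black. -/
def HasType (m δ : ℕ) (D : Set (Fin (m * δ) → ZMod 2)) (nw nr nb : ℕ) : Prop :=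
  nw + nr + nb = δ ∧ nr ≤ 1 ∧
  ∀ j : Fin δ,
    ((j : ℕ) < nw → IsWhite (box m δ D j)) ∧
    (nw ≤ (j : ℕ) → (j : ℕ) < nw + nr → IsRuled (box m δ D j)) ∧
    (nw + nr ≤ (j : ℕ) → IsBlack (box m δ D j))

/-- `D` and `E` have the same type: corresponding boxes have the same kind. -/
def SameType (m δ : ℕ) (D E : Set (Fin (m * δ) → ZMod 2)) : Prop :=
  ∀ j : Fin δ,
    (IsWhite (box m δ D j) ↔ IsWhite (box m δ E j)) ∧
    (IsBlack (box m δ D j) ↔ IsBlack (box m δ E j))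

lemma m_le_mul (m d : ℕ) (h : 1 ≤ d) : m ≤ m * d := by
  calc m = m * 1 := (Nat.mul_one m).symm
  _ ≤ m * d := Nat.mul_le_mul le_rfl h

lemma shift_lt (m δ a : ℕ) (ha : a ≤ δ) (k : ℕ) (hk : k < m * (δ - a)) :
    m * a + k < m * δ := by
  have h := Nat.add_lt_add_left hk (m * a)
  rwa [← Nat.mul_add, Nat.add_sub_cancel' ha] at h

/-- The index in `Fin (m * δ)` obtained by skipping the first `a` bricks. -/
def shiftIdx (m δ a : ℕ) (ha : a ≤ δ) (k : Fin (m * (δ - a))) : Fin (m * δ) :=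
  ⟨m * a + k.val, shift_lt m δ a ha k.val k.isLt⟩

/-- The submatrix `Λ_{(a+1,b+1):(δ,δ)}` (blocks with row brick ≥ a and column brick ≥ b). -/
def subBlock (m δ : ℕ) (Λ : Matrix (Fin (m * δ)) (Fin (m * δ)) (ZMod 2))
    (a b : ℕ) (ha : a ≤ δ) (hb : b ≤ δ) :
    Matrix (Fin (m * (δ - a))) (Fin (m * (δ - b))) (ZMod 2) :=
  Matrix.of fun r c => Λ (shiftIdx m δ a ha r) (shiftIdx m δ b hb c)

/-- The column of blocks `Λ_{(a+1,j+1):(δ,j+1)}` (row bricks ≥ a, column brick j). -/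
def subColBlock (m δ : ℕ) (Λ : Matrix (Fin (m * δ)) (Fin (m * δ)) (ZMod 2))
    (a : ℕ) (ha : a ≤ δ) (j : Fin δ) :
    Matrix (Fin (m * (δ - a))) (Fin m) (ZMod 2) :=
  Matrix.of fun r c => Λ (shiftIdx m δ a ha r) (brickIdx m δ j c)

/-- The row of blocks `Λ_{(j+1,1):(j+1,c2)}` (row brick j, column bricks < c2). -/
def rowBlock (m δ : ℕ) (Λ : Matrix (Fin (m * δ)) (Fin (m * δ)) (ZMod 2))
    (j : Fin δ) (c2 : ℕ) (hc : c2 ≤ δ) :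
    Matrix (Fin m) (Fin (m * c2)) (ZMod 2) :=
  Matrix.of fun i c => Λ (brickIdx m δ j i) (Fin.castLE (Nat.mul_le_mul le_rfl hc) c)

/-- The block `Λ_{j+1, j'+1}`. -/
def block (m δ : ℕ) (Λ : Matrix (Fin (m * δ)) (Fin (m * δ)) (ZMod 2)) (j j' : Fin δ) :
    Matrix (Fin m) (Fin m) (ZMod 2) :=
  Matrix.of fun i i' => Λ (brickIdx m δ j i) (brickIdx m δ j' i')

/-- The set `R × 𝔽₂^{m (d-1)}` of vectors of `d` bricks whose first brick lies in `R`. -/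
def rulDomain (m d : ℕ) (hd : 1 ≤ d) (R : Set (Fin m → ZMod 2)) :
    Set (Fin (m * d) → ZMod 2) :=
  { u | (fun i : Fin m => u (Fin.castLE (m_le_mul m d hd) i)) ∈ R }

/-- The identification `𝔽₂ⁿ → ℤ/2ⁿℤ` by binary expansion: `(a₀,…,a_{n-1}) ↦ ∑ aᵢ 2ⁱ`. -/
def vecToZMod (n : ℕ) (v : Fin n → ZMod 2) : ZMod (2 ^ n) :=
  ∑ i : Fin n, ((v i).val : ZMod (2 ^ n)) * 2 ^ (i : ℕ)

/-- The inverse identification `ℤ/2ⁿℤ → 𝔽₂ⁿ`: the binary digits of the representative. -/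
def zmodToVec (n : ℕ) (x : ZMod (2 ^ n)) : Fin n → ZMod 2 :=
  fun i => (((x.val / 2 ^ (i : ℕ)) % 2 : ℕ) : ZMod 2)

/-- Addition modulo `2ⁿ` transported to `𝔽₂ⁿ` via binary expansion: `v ⊞ k`. -/
def boxAdd (n : ℕ) (v k : Fin n → ZMod 2) : Fin n → ZMod 2 :=
  zmodToVec n (vecToZMod n v + vecToZMod n k)

open scoped Pointwise

/-! ### Binary expansion -/

section BinaryExpansion

variable {n : ℕ}

lemma vecToZMod_zmodToVec (x : ZMod (2 ^ n)) : vecToZMod n (zmodToVec n x) = x := by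
  have digits := congrArg Fin.val
    ((finFunctionFinEquiv (m := 2) (n := n)).apply_symm_apply ⟨x.val, x.val_lt⟩)
  simp only [finFunctionFinEquiv_apply, finFunctionFinEquiv_symm_apply_val] at digits
  calc vecToZMod n (zmodToVec n x)
      = ((∑ i : Fin n, x.val / 2 ^ (i : ℕ) % 2 * 2 ^ (i : ℕ) : ℕ) : ZMod (2 ^ n)) := by
        simp only [vecToZMod, zmodToVec, ZMod.val_natCast, Nat.mod_mod, Nat.cast_sum, Nat.cast_mul,
          Nat.cast_pow, Nat.cast_ofNat]
    _ = x := by rw [digits, ZMod.natCast_zmod_val]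

lemma vecToZMod_bijective : Function.Bijective (vecToZMod n) :=
  (Function.RightInverse.surjective vecToZMod_zmodToVec).bijective_of_nat_card_le (by simp)

variable (n) in
/-- Binary expansion as a bijection `𝔽₂ⁿ ≃ ℤ/2ⁿℤ`. -/
def binaryEquiv : (Fin n → ZMod 2) ≃ ZMod (2 ^ n) where
  toFun := vecToZMod n
  invFun := zmodToVec n
  left_inv := Function.RightInverse.leftInverse_of_injective vecToZMod_zmodToVec
    vecToZMod_bijective.injective
  right_inv := vecToZMod_zmodToVec

lemma castHom_binaryEquiv {t : ℕ} (ht : t ≤ n) (v : Fin n → ZMod 2) :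
    ZMod.castHom (pow_dvd_pow 2 ht) (ZMod (2 ^ t)) (binaryEquiv n v) =
      binaryEquiv t fun i => v (Fin.castLE ht i) := by
  obtain ⟨s, rfl⟩ := Nat.exists_eq_add_of_le ht
  have two_pow_eq_zero : (2 : ZMod (2 ^ t)) ^ t = 0 := mod_cast ZMod.natCast_self (2 ^ t)
  simp only [binaryEquiv, Equiv.coe_fn_mk, vecToZMod, Fin.sum_univ_add, map_add, map_sum, map_mul,
    map_pow, map_natCast, map_ofNat, Fin.val_castAdd, Fin.val_natAdd, pow_add, two_pow_eq_zero,
    zero_mul, mul_zero, Finset.sum_const_zero, add_zero]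
  rfl

end BinaryExpansion

/-! ### Blocks of the translations of `ℤ/Nℤ` -/

section CyclicGroup

variable {N : ℕ}

lemma exists_eq_ker_castHom (H : AddSubgroup (ZMod N)) :
    ∃ (d : ℕ) (h : d ∣ N), H = (ZMod.castHom h (ZMod d)).toAddMonoidHom.ker := by
  obtain ⟨a, ha⟩ := Int.subgroup_cyclic (H.comap (Int.castAddHom (ZMod N)))
  rw [← AddSubgroup.zmultiples_eq_closure] at ha
  have mem_iff (z : ℤ) : (z : ZMod N) ∈ H ↔ (a.natAbs : ℤ) ∣ z := by
    rw [Int.natAbs_dvd, ← Int.mem_zmultiples_iff, ← ha]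
    rfl
  have dvd : a.natAbs ∣ N := by
    have := (mem_iff N).1 (by simp)
    exact_mod_cast this
  refine ⟨a.natAbs, dvd, ?_⟩
  ext x
  obtain ⟨z, rfl⟩ := ZMod.intCast_surjective x
  rw [mem_iff, ← ZMod.intCast_zmod_eq_zero_iff_dvd, AddMonoidHom.mem_ker,
    RingHom.toAddMonoidHom_eq_coe, AddMonoidHom.coe_coe, map_intCast]

lemma exists_eq_castHom_fiber_of_isBlock {B : Set (ZMod N)} (hB : AddAction.IsBlock (ZMod N) B)
    {a : ZMod N} (ha : a ∈ B) :
    ∃ (d : ℕ) (h : d ∣ N), B = {x | ZMod.castHom h (ZMod d) x = ZMod.castHom h (ZMod d) a} := by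
  obtain ⟨d, hd, hker⟩ := exists_eq_ker_castHom (AddAction.stabilizer (ZMod N) B)
  refine ⟨d, hd, ?_⟩
  ext x
  calc x ∈ B ↔ ∃ y ∈ AddAction.stabilizer (ZMod N) B, y + a = x := by
        conv_lhs => rw [← hB.orbit_stabilizer_eq ha]
        exact ⟨fun ⟨⟨y, hy⟩, h⟩ => ⟨y, hy, h⟩, fun ⟨y, hy, h⟩ => ⟨⟨y, hy⟩, h⟩⟩
    _ ↔ x - a ∈ AddAction.stabilizer (ZMod N) B := by
        simp only [← eq_sub_iff_add_eq, exists_eq_right]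
    _ ↔ ZMod.castHom hd (ZMod d) x = ZMod.castHom hd (ZMod d) a := by
        rw [hker, AddMonoidHom.mem_ker, map_sub, sub_eq_zero]
        rfl

end CyclicGroup

/-! ### Cylinders -/

section Cylinder

variable {α : Type*} {n t : ℕ}

/-- The words of length `n` with the same first `t` letters as `v`. -/
def cylinder (t : ℕ) (v : Fin n → α) : Set (Fin n → α) :=
  {u | ∀ i : Fin n, (i : ℕ) < t → u i = v i}

lemma cylinder_zero (v : Fin n → α) : cylinder 0 v = Set.univ := by
  simp [cylinder]

lemma cylinder_of_le (h : n ≤ t) (v : Fin n → α) : cylinder t v = {v} := by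
  ext u
  exact ⟨fun hu => funext fun i => hu i (i.isLt.trans_le h), fun hu i _ => congrFun hu i⟩

lemma isRuled_cylinder [Nontrivial α] (h0 : 0 < t) (h : t < n) (v : Fin n → α) :
    IsRuled (cylinder t v) := by
  constructor
  · rintro ⟨a, ha⟩
    let last : Fin n := ⟨n - 1, by omega⟩
    obtain ⟨y, hy⟩ := exists_ne (v last)
    have hv : v ∈ cylinder t v := fun _ _ => rfl
    have hu : Function.update v last y ∈ cylinder t v := fun i hi =>
      Function.update_of_ne (by rintro rfl; exact absurd hi (by simp only [last]; omega)) _ _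
    rw [ha] at hv hu
    exact hy (by simpa using congrFun (hu.trans hv.symm) last)
  · intro huniv
    let first : Fin n := ⟨0, by omega⟩
    obtain ⟨y, hy⟩ := exists_ne (v first)
    have hu : Function.update v first y ∈ cylinder t v := huniv ▸ Set.mem_univ _
    exact hy (by simpa using hu first h0)

lemma image_add_cylinder [AddGroup α] (v a : Fin n → α) :
    (· + a) '' cylinder t v = cylinder t (v + a) := by
  ext u
  simp [cylinder, ← sub_eq_add_neg, sub_eq_iff_eq_add]

lemma mem_cylinder_iff_castHom_eq (ht : t ≤ n) {u v : Fin n → ZMod 2} :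
    u ∈ cylinder t v ↔
      ZMod.castHom (pow_dvd_pow 2 ht) (ZMod (2 ^ t)) (binaryEquiv n u) =
        ZMod.castHom (pow_dvd_pow 2 ht) (ZMod (2 ^ t)) (binaryEquiv n v) := by
  rw [castHom_binaryEquiv ht, castHom_binaryEquiv ht, (binaryEquiv t).apply_eq_iff_eq, funext_iff]
  exact ⟨fun h i => h _ i.isLt, fun h i hi => h ⟨i, hi⟩⟩

end Cylinder

/-! ### The group generated by the round functions -/

section RoundGroup

variable {n t : ℕ}

/-- The translation `v ↦ v ⊞ k` as a permutation of `𝔽₂ⁿ`. -/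
def boxAddPerm (k : Fin n → ZMod 2) : Equiv.Perm (Fin n → ZMod 2) :=
  ((binaryEquiv n).trans (Equiv.addRight (binaryEquiv n k))).trans (binaryEquiv n).symm

lemma boxAddPerm_apply (k v : Fin n → ZMod 2) : boxAddPerm k v = boxAdd n v k := rfl

lemma binaryEquiv_boxAddPerm (k v : Fin n → ZMod 2) :
    binaryEquiv n (boxAddPerm k v) = binaryEquiv n v + binaryEquiv n k :=
  (binaryEquiv n).apply_symm_apply _

lemma boxAdd_zero (v : Fin n → ZMod 2) : boxAdd n v 0 = v := by
  rw [← boxAddPerm_apply, ← (binaryEquiv n).apply_eq_iff_eq, binaryEquiv_boxAddPerm,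
    add_eq_left]
  simp [binaryEquiv, vecToZMod]

lemma exists_boxAddPerm_eq (v w : Fin n → ZMod 2) : ∃ k, boxAddPerm k v = w := by
  refine ⟨(binaryEquiv n).symm (binaryEquiv n w - binaryEquiv n v), (binaryEquiv n).injective ?_⟩
  rw [binaryEquiv_boxAddPerm, Equiv.apply_symm_apply, add_sub_cancel]

lemma image_boxAddPerm_cylinder (ht : t ≤ n) (k v : Fin n → ZMod 2) :
    boxAddPerm k '' cylinder t v = cylinder t (boxAddPerm k v) := by
  ext u
  obtain ⟨u, rfl⟩ := (boxAddPerm k).surjective u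
  rw [(boxAddPerm k).injective.mem_set_image, mem_cylinder_iff_castHom_eq ht,
    mem_cylinder_iff_castHom_eq ht, binaryEquiv_boxAddPerm, binaryEquiv_boxAddPerm, map_add,
    map_add, add_left_inj]

/-- The group `Γ∞` generated by the round functions `v ↦ ρ v ⊞ k`, where `ρ` is the keyless
part of a round. -/
def roundGroup (ρ : Equiv.Perm (Fin n → ZMod 2)) : Subgroup (Equiv.Perm (Fin n → ZMod 2)) :=
  Subgroup.closure {g | ∃ k, ∀ v, g v = boxAdd n (ρ v) k}

lemma mem_roundGroup_self (ρ : Equiv.Perm (Fin n → ZMod 2)) : ρ ∈ roundGroup ρ :=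
  Subgroup.subset_closure ⟨0, fun v => (boxAdd_zero (ρ v)).symm⟩

lemma boxAddPerm_mem_roundGroup (ρ : Equiv.Perm (Fin n → ZMod 2)) (k : Fin n → ZMod 2) :
    boxAddPerm k ∈ roundGroup ρ :=
  (Subgroup.mul_mem_cancel_right _ (mem_roundGroup_self ρ)).1 <|
    Subgroup.subset_closure ⟨k, fun _ => rfl⟩

variable {G : Subgroup (Equiv.Perm (Fin n → ZMod 2))}

lemma isPretransitive_of_boxAddPerm_mem (hG : ∀ k, boxAddPerm k ∈ G) :
    MulAction.IsPretransitive G (Fin n → ZMod 2) where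
  exists_smul_eq v w :=
    let ⟨k, hk⟩ := exists_boxAddPerm_eq v w
    ⟨⟨boxAddPerm k, hG k⟩, hk⟩

lemma isBlock_image_binaryEquiv (hG : ∀ k, boxAddPerm k ∈ G) {B : Set (Fin n → ZMod 2)}
    (hB : MulAction.IsBlock G B) : AddAction.IsBlock (ZMod (2 ^ n)) (binaryEquiv n '' B) := by
  rw [AddAction.isBlock_iff_vadd_eq_or_disjoint]
  intro x
  obtain ⟨k, rfl⟩ := (binaryEquiv n).surjective x
  have vadd_image :
      binaryEquiv n k +ᵥ binaryEquiv n '' B = binaryEquiv n '' (boxAddPerm k '' B) := by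
    rw [← Set.image_vadd, Set.image_image, Set.image_image]
    refine Set.image_congr fun v _ => ?_
    rw [binaryEquiv_boxAddPerm, vadd_eq_add, add_comm]
  rw [vadd_image, Set.disjoint_image_iff (binaryEquiv n).injective,
    (binaryEquiv n).injective.image_injective.eq_iff]
  exact hB.smul_eq_or_disjoint ⟨boxAddPerm k, hG k⟩

lemma exists_eq_cylinder_of_isBlock (hG : ∀ k, boxAddPerm k ∈ G) {B : Set (Fin n → ZMod 2)}
    (hB : MulAction.IsBlock G B) {a : Fin n → ZMod 2} (ha : a ∈ B) :
    ∃ t ≤ n, B = cylinder t a := by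
  obtain ⟨d, hd, hfiber⟩ := exists_eq_castHom_fiber_of_isBlock (isBlock_image_binaryEquiv hG hB)
    (Set.mem_image_of_mem (binaryEquiv n) ha)
  obtain ⟨t, ht, rfl⟩ := (Nat.dvd_prime_pow Nat.prime_two).1 hd
  refine ⟨t, ht, ?_⟩
  ext u
  rw [mem_cylinder_iff_castHom_eq ht, ← (binaryEquiv n).injective.mem_set_image, hfiber]
  rfl

theorem roundGroup_isPreprimitive (ρ : Equiv.Perm (Fin n → ZMod 2)) (a : Fin n → ZMod 2)
    (hρ : ∀ t, 0 < t → t < n → ρ '' cylinder t a ≠ cylinder t (ρ a)) :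
    MulAction.IsPreprimitive (roundGroup ρ) (Fin n → ZMod 2) := by
  have := isPretransitive_of_boxAddPerm_mem (boxAddPerm_mem_roundGroup ρ)
  refine .of_isTrivialBlock_base a fun {B} ha hB => ?_
  obtain ⟨t, ht, rfl⟩ := exists_eq_cylinder_of_isBlock (boxAddPerm_mem_roundGroup ρ) hB ha
  rcases t.eq_zero_or_pos with rfl | h0
  · exact Or.inr (cylinder_zero a)
  rcases ht.eq_or_lt with rfl | hlt
  · exact Or.inl (cylinder_of_le le_rfl a ▸ Set.subsingleton_singleton)
  obtain ⟨k, hk⟩ := exists_boxAddPerm_eq a (ρ a)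
  -- Two images of a block that share a point (here `ρ a`) coincide.
  have image_eq : ρ '' cylinder t a = boxAddPerm k '' cylinder t a :=
    MulAction.isBlock_iff_smul_eq_smul_of_nonempty.1 hB
      (g₁ := ⟨ρ, mem_roundGroup_self ρ⟩) (g₂ := ⟨boxAddPerm k, boxAddPerm_mem_roundGroup ρ k⟩)
      ⟨ρ a, Set.mem_image_of_mem ρ ha, a, ha, hk⟩
  exact absurd (image_eq.trans (hk ▸ image_boxAddPerm_cylinder ht k a)) (hρ t h0 hlt)

end RoundGroup

/-! ### Boxes, types and parallel maps -/

section Kinds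

variable {α β : Type*} {S : Set α} {f : α → β}

lemma isWhite_image_iff (hf : Function.Injective f) : IsWhite (f '' S) ↔ IsWhite S := by
  refine ⟨fun ⟨b, hb⟩ => ?_, fun ⟨a, ha⟩ => ⟨f a, by rw [ha, Set.image_singleton]⟩⟩
  obtain ⟨a, -, rfl⟩ : b ∈ f '' S := hb ▸ rfl
  exact ⟨a, hf.image_injective (by rw [hb, Set.image_singleton])⟩

lemma isBlack_image_iff (hf : Function.Bijective f) : IsBlack (f '' S) ↔ IsBlack S := by
  rw [IsBlack, IsBlack, ← Set.image_univ_of_surjective hf.surjective,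
    hf.injective.image_injective.eq_iff]

lemma isRuled_image_iff (hf : Function.Bijective f) : IsRuled (f '' S) ↔ IsRuled S := by
  rw [IsRuled, IsRuled, isWhite_image_iff hf.injective, isBlack_image_iff hf]

lemma IsRuled.two_le_ncard [Finite α] (hS : IsRuled S) (hne : S.Nonempty) : 2 ≤ S.ncard :=
  Set.one_lt_ncard_iff_nontrivial.2 (hne.exists_eq_singleton_or_nontrivial.resolve_left hS.1)

lemma IsRuled.ncard_lt_card [Finite α] (hS : IsRuled S) : S.ncard < Nat.card α :=
  Set.ncard_lt_card hS.2

end Kinds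

section Bricks

variable {m δ : ℕ}

lemma exists_brickIdx_eq (i : Fin (m * δ)) : ∃ j k, brickIdx m δ j k = i :=
  have hm : 0 < m := Nat.pos_of_mul_pos_right i.pos
  ⟨⟨i / m, Nat.div_lt_of_lt_mul i.isLt⟩, ⟨i % m, Nat.mod_lt _ hm⟩, Fin.ext (Nat.div_add_mod _ _)⟩

lemma brickProj_injective : Function.Injective (brickProj m δ) := by
  intro u v huv
  ext i
  obtain ⟨j, k, rfl⟩ := exists_brickIdx_eq i
  exact congrFun (congrFun huv j) k

lemma SameType.trans {D E F : Set (Fin (m * δ) → ZMod 2)} (h : SameType m δ D E)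
    (h' : SameType m δ E F) : SameType m δ D F :=
  fun j => ⟨(h j).1.trans (h' j).1, (h j).2.trans (h' j).2⟩

/-- The map `f` acts on each brick separately, by `fbrick j` on the `j`-th one. -/
def IsParallel (f : (Fin (m * δ) → ZMod 2) → Fin (m * δ) → ZMod 2)
    (fbrick : Fin δ → (Fin m → ZMod 2) → Fin m → ZMod 2) : Prop :=
  ∀ v j, brickProj m δ (f v) j = fbrick j (brickProj m δ v j)

/-- The set `S₁ × ⋯ × S_δ` of the vectors whose `j`-th brick lies in `S j` for every `j`. -/
def brickProd (S : Fin δ → Set (Fin m → ZMod 2)) : Set (Fin (m * δ) → ZMod 2) :=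
  {v | ∀ j, brickProj m δ v j ∈ S j}

namespace IsParallel

variable {f : (Fin (m * δ) → ZMod 2) → Fin (m * δ) → ZMod 2}
  {fbrick : Fin δ → (Fin m → ZMod 2) → Fin m → ZMod 2}

lemma bijective (hf : IsParallel f fbrick) (hbij : ∀ j, Function.Bijective (fbrick j)) :
    Function.Bijective f := by
  refine Finite.injective_iff_bijective.1 fun u v huv => brickProj_injective (funext fun j => ?_)
  exact (hbij j).injective (by rw [← hf, ← hf, huv])

lemma box_image (hf : IsParallel f fbrick) (D : Set (Fin (m * δ) → ZMod 2)) (j : Fin δ) :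
    box m δ (f '' D) j = fbrick j '' box m δ D j := by
  simp only [box, Set.image_image, hf _ j]

lemma sameType_image (hf : IsParallel f fbrick) (hbij : ∀ j, Function.Bijective (fbrick j))
    (D : Set (Fin (m * δ) → ZMod 2)) : SameType m δ (f '' D) D := fun j => by
  rw [hf.box_image]
  exact ⟨isWhite_image_iff (hbij j).injective, isBlack_image_iff (hbij j)⟩

lemma image_brickProd (hf : IsParallel f fbrick) (hbij : ∀ j, Function.Bijective (fbrick j))
    (S : Fin δ → Set (Fin m → ZMod 2)) :
    f '' brickProd S = brickProd fun j => fbrick j '' S j := by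
  ext u
  obtain ⟨v, rfl⟩ := (hf.bijective hbij).surjective u
  rw [(hf.bijective hbij).injective.mem_set_image]
  exact forall_congr' fun j => by rw [hf, (hbij j).injective.mem_set_image]

end IsParallel

lemma stdForm_brickProd {S : Fin δ → Set (Fin m → ZMod 2)} {nw nr nb : ℕ}
    (hsum : nw + nr + nb = δ) (hnr : nr ≤ 1)
    (hne : ∀ j, (S j).Nonempty)
    (hwhite : ∀ j : Fin δ, (j : ℕ) < nw → IsWhite (S j))
    (hruled : ∀ j : Fin δ, nw ≤ j → (j : ℕ) < nw + nr → IsRuled (S j))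
    (hblack : ∀ j : Fin δ, nw + nr ≤ j → IsBlack (S j)) :
    StdForm m δ (brickProd S) nw nr nb := by
  choose w hw using hne
  have white_eq (j : Fin δ) (hj : (j : ℕ) < nw) : S j = {w j} := by
    obtain ⟨a, ha⟩ := hwhite j hj
    have hwa : w j = a := by simpa [ha] using hw j
    rw [ha, hwa]
  obtain ⟨R, hR⟩ : ∃ R : Set (Fin m → ZMod 2), ∀ j : Fin δ, (j : ℕ) = nw → S j = R := by
    by_cases h : nw < δ
    · exact ⟨S ⟨nw, h⟩, fun j hj => congrArg S (Fin.ext hj)⟩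
    · exact ⟨∅, fun j hj => absurd (hj ▸ j.isLt) h⟩
  refine ⟨hsum, hnr, w, R, fun h1 => ?_, ?_⟩
  · let j : Fin δ := ⟨nw, by omega⟩
    have hSj : IsRuled (S j) := hruled j le_rfl (by simp only [j]; omega)
    have hlt := hSj.ncard_lt_card
    have hcard : Nat.card (Fin m → ZMod 2) = 2 ^ m := by simp
    rw [← hR j rfl]
    exact ⟨hSj.two_le_ncard ⟨w j, hw j⟩, by omega⟩
  · ext v
    refine ⟨fun hv => ⟨fun j hj => ?_, fun _ j hj => hR j hj ▸ hv j⟩, fun hv j => ?_⟩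
    · simpa [white_eq j hj] using hv j
    · rcases lt_or_ge (j : ℕ) nw with hj | hj
      · rw [white_eq j hj, hv.1 j hj]
        rfl
      · rcases lt_or_ge (j : ℕ) (nw + nr) with hj' | hj'
        · have hjnw : (j : ℕ) = nw := by omega
          exact hR j hjnw ▸ hv.2 (by omega) j hjnw
        · rw [hblack j hj']
          trivial

lemma cylinder_eq_brickProd (t : ℕ) (v : Fin (m * δ) → ZMod 2) :
    cylinder t v = brickProd fun j => cylinder (t - m * j) (brickProj m δ v j) := by
  ext u
  refine ⟨fun hu j i hi => hu _ (Nat.add_lt_of_lt_sub' hi), fun hu i hi => ?_⟩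
  obtain ⟨j, k, rfl⟩ := exists_brickIdx_eq i
  exact hu j k (Nat.lt_sub_iff_add_lt'.2 hi)

lemma IsParallel.exists_stdForm_image_cylinder
    {f : (Fin (m * δ) → ZMod 2) → Fin (m * δ) → ZMod 2}
    {fbrick : Fin δ → (Fin m → ZMod 2) → Fin m → ZMod 2}
    (hf : IsParallel f fbrick) (hbij : ∀ j, Function.Bijective (fbrick j))
    {t : ℕ} (h0 : 0 < t) (ht : t < m * δ) (v : Fin (m * δ) → ZMod 2) :
    ∃ nw nr nb, StdForm m δ (f '' cylinder t v) nw nr nb ∧ nw ≠ δ ∧ nb ≠ δ := by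
  have hq : t / m < δ := Nat.div_lt_of_lt_mul ht
  have hmod : t % m < m := Nat.mod_lt t (Nat.pos_of_mul_pos_right (h0.trans ht))
  have hdiv : m * (t / m) + t % m = t := Nat.div_add_mod t m
  generalize t / m = q, t % m = r at hq hmod hdiv
  obtain ⟨nr, hnr, hnr0⟩ : ∃ nr ≤ 1, nr = 0 ↔ r = 0 :=
    ⟨if r = 0 then 0 else 1, by split_ifs <;> omega, by simp⟩
  have hpos : 0 < q + nr := by
    by_contra h
    obtain ⟨rfl, rfl⟩ : q = 0 ∧ r = 0 := by omega
    simp only [mul_zero, add_zero] at hdiv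
    omega
  refine ⟨q, nr, δ - q - nr, ?_, hq.ne, by omega⟩
  rw [cylinder_eq_brickProd, hf.image_brickProd hbij]
  refine stdForm_brickProd (by omega) hnr (fun j => ?_) (fun j hj => ?_) (fun j hj hj' => ?_)
    (fun j hj => ?_)
  · exact Set.Nonempty.image _ ⟨_, fun _ _ => rfl⟩
  · have : m * (j + 1) ≤ m * q := Nat.mul_le_mul le_rfl hj
    rw [isWhite_image_iff (hbij j).injective]
    exact ⟨_, cylinder_of_le (by rw [mul_add] at this; omega) _⟩
  · obtain rfl : (j : ℕ) = q := by omega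
    rw [isRuled_image_iff (hbij j)]
    exact isRuled_cylinder (by omega) (by omega) _
  · have hr : r ≤ m * nr := by
      rcases nr.eq_zero_or_pos with h | h
      · exact (hnr0.1 h).le.trans (Nat.zero_le _)
      · exact hmod.le.trans (Nat.le_mul_of_pos_right m h)
    have : t ≤ m * j := calc
      t = m * q + r := hdiv.symm
      _ ≤ m * (q + nr) := by rw [mul_add]; omega
      _ ≤ m * j := Nat.mul_le_mul le_rfl hj
    rw [isBlack_image_iff (hbij j), Nat.sub_eq_zero_of_le this]
    exact cylinder_zero _

lemma sameType_cylinder (t : ℕ) (v w : Fin (m * δ) → ZMod 2) :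
    SameType m δ (cylinder t v) (cylinder t w) := by
  -- XOR by a constant is itself a parallel map.
  have hadd : IsParallel (m := m) (δ := δ) (· + (v - w)) fun j => (· + brickProj m δ (v - w) j) :=
    fun _ _ => rfl
  have := hadd.sameType_image
    (fun j => (Equiv.addRight (brickProj m δ (v - w) j)).bijective) (cylinder t w)
  rwa [image_add_cylinder, add_sub_cancel] at this

end Bricks

lemma eq_singleton_univ_or_eq_range_singleton {G X : Type*} [Group G] [MulAction G X]
    (hG : MulAction.IsPreprimitive G X) {B : Set (Set X)} (hB : Setoid.IsPartition B)
    (hinv : ∀ b ∈ B, ∀ g : G, g • b ∈ B) :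
    B = {Set.univ} ∨ B = Set.range fun x : X => ({x} : Set X) := by
  have isBlock_of_mem (b) (hb : b ∈ B) : MulAction.IsBlock G b := fun g g' hne =>
    hB.pairwiseDisjoint (hinv b hb g) (hinv b hb g') hne
  have eq_of_mem {b c x} (hb : b ∈ B) (hc : c ∈ B) (hxb : x ∈ b) (hxc : x ∈ c) : b = c :=
    (hB.2 x).unique ⟨hb, hxb⟩ ⟨hc, hxc⟩
  by_cases huniv : Set.univ ∈ B
  · refine Or.inl (Set.eq_singleton_iff_unique_mem.2 ⟨huniv, fun b hb => ?_⟩)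
    obtain ⟨x, hx⟩ := Setoid.nonempty_of_mem_partition hB hb
    exact eq_of_mem hb huniv hx (Set.mem_univ x)
  · right
    have eq_singleton {b x} (hb : b ∈ B) (hx : x ∈ b) : b = {x} := by
      rcases (isBlock_of_mem b hb).subsingleton_or_eq_univ with h | rfl
      · exact h.eq_singleton_of_mem hx
      · exact absurd hb huniv
    ext b
    constructor
    · intro hb
      obtain ⟨x, hx⟩ := Setoid.nonempty_of_mem_partition hB hb
      exact ⟨x, (eq_singleton hb hx).symm⟩
    · rintro ⟨x, rfl⟩
      obtain ⟨b, hb, hx⟩ := (hB.2 x).exists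
      rwa [eq_singleton hb hx] at hb

theorem stmt_17_general {m δ : ℕ} {γbrick : Fin δ → (Fin m → ZMod 2) → Fin m → ZMod 2}
    (hγbij : ∀ j, Function.Bijective (γbrick j))
    {γ : (Fin (m * δ) → ZMod 2) → Fin (m * δ) → ZMod 2} (hγ : IsParallel γ γbrick)
    {lam : (Fin (m * δ) → ZMod 2) → Fin (m * δ) → ZMod 2} (hlam : Function.Bijective lam)
    (hntp : ∀ (D : Set (Fin (m * δ) → ZMod 2)) (nw nr nb : ℕ),
      StdForm m δ D nw nr nb → nw ≠ δ → nb ≠ δ → ¬ SameType m δ D (lam '' D)) :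
    MulAction.IsPreprimitive (Subgroup.closure {g : Equiv.Perm (Fin (m * δ) → ZMod 2) |
      ∃ k, ∀ v, g v = boxAdd (m * δ) (lam (γ v)) k}) (Fin (m * δ) → ZMod 2) := by
  let ρ := Equiv.ofBijective (lam ∘ γ) (hlam.comp (hγ.bijective hγbij))
  refine roundGroup_isPreprimitive ρ 0 fun t h0 ht himage => ?_
  obtain ⟨nw, nr, nb, hstd, hnw, hnb⟩ := hγ.exists_stdForm_image_cylinder hγbij h0 ht 0
  refine hntp _ nw nr nb hstd hnw hnb ?_
  rw [← Set.image_comp, show lam ∘ γ '' cylinder t 0 = _ from himage]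
  exact (hγ.sameType_image hγbij _).trans (sameType_cylinder t 0 _)

/-- **primitivity of SPNmod.** Let `γ` be a parallel S-box whose bricks
`γ_j` are bijections of `𝔽₂^m` with `γ_j(0) ≠ 0`, and let `λ` be a bijective linear map
preserving no non-trivial type.  Then the group generated by the round functions
`v ↦ λ(γ(v)) ⊞ k` is primitive: it acts transitively, and every invariant partition is
`{V}` or the singletons. -/
theorem stmt_17 (m δ : ℕ) (hm : 2 ≤ m) (hδ : 2 ≤ δ)
    (γbrick : Fin δ → (Fin m → ZMod 2) → (Fin m → ZMod 2))
    (hγbij : ∀ j, Function.Bijective (γbrick j))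
    (hγ0 : ∀ j, γbrick j 0 ≠ 0)
    (γ : (Fin (m * δ) → ZMod 2) → (Fin (m * δ) → ZMod 2))
    (hγ : ∀ v (j : Fin δ), brickProj m δ (γ v) j = γbrick j (brickProj m δ v j))
    (lam : (Fin (m * δ) → ZMod 2) →ₗ[ZMod 2] (Fin (m * δ) → ZMod 2))
    (hlam : Function.Bijective lam)
    (hntp : ∀ (D : Set (Fin (m * δ) → ZMod 2)) (nw nr nb : ℕ),
      StdForm m δ D nw nr nb → nw ≠ δ → nb ≠ δ →
      ¬ SameType m δ D ((fun v => lam v) '' D)) :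
    (∀ v w : Fin (m * δ) → ZMod 2,
      ∃ g ∈ Subgroup.closure {g : Equiv.Perm (Fin (m * δ) → ZMod 2) |
          ∃ k, ∀ v, g v = boxAdd (m * δ) (lam (γ v)) k},
        g v = w) ∧
    (∀ B : Set (Set (Fin (m * δ) → ZMod 2)), Setoid.IsPartition B →
      (∀ b ∈ B, ∀ g ∈ Subgroup.closure {g : Equiv.Perm (Fin (m * δ) → ZMod 2) |
          ∃ k, ∀ v, g v = boxAdd (m * δ) (lam (γ v)) k},
        (⇑g) '' b ∈ B) →
      B = {Set.univ} ∨
        B = Set.range fun v : Fin (m * δ) → ZMod 2 => ({v} : Set (Fin (m * δ) → ZMod 2))) := by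
  have primitive := stmt_17_general hγbij hγ hlam hntp
  exact ⟨fun v w => let ⟨g, hg⟩ := primitive.exists_smul_eq v w; ⟨g, g.property, hg⟩,
    fun B hB hinv => eq_singleton_univ_or_eq_range_singleton primitive hB
      fun b hb g => hinv b hb g g.property⟩
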